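/- Let G be a finite group, A an abelian subgroup of G of index 2, and b an element of G not in A. Then the set B = {(b·a·b⁻¹)·a⁻¹ : a ∈ A} is a subgroup of G, and it equals the commutator (derived) subgroup of G. -/

import Mathlib

/-- For an abelian normal subgroup `A` and `b : G`, the homomorphism `a ↦ ⁅b, a⁆` on `A`. -/
def commutatorHom {G : Type*} [Group G] (A : Subgroup G) [A.Normal]
    (hcomm : ∀ x ∈ A, ∀ y ∈ A, x * y = y * x) (b : G) : A →* G :=
  MonoidHom.mk' (fun a => b * a * b⁻¹ * (a : G)⁻¹) fun ⟨x, hx⟩ ⟨y, hy⟩ => by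
    have h₁ : x⁻¹ * (b * y * b⁻¹) = b * y * b⁻¹ * x⁻¹ :=
      hcomm _ (A.inv_mem hx) _ (Subgroup.Normal.conj_mem ‹_› y hy b)
    have h₂ : x⁻¹ * y⁻¹ = y⁻¹ * x⁻¹ := hcomm _ (A.inv_mem hx) _ (A.inv_mem hy)
    calc b * (x * y) * b⁻¹ * (x * y)⁻¹
        = b * x * b⁻¹ * (b * y * b⁻¹) * (y⁻¹ * x⁻¹) := by group
      _ = b * x * b⁻¹ * (b * y * b⁻¹ * x⁻¹) * y⁻¹ := by rw [← h₂]; group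
      _ = b * x * b⁻¹ * x⁻¹ * (b * y * b⁻¹ * y⁻¹) := by rw [← h₁]; group

open scoped commutatorElement in
theorem commutatorElement_mem_range_commutatorHom {G : Type*} [Group G] (A : Subgroup G)
    [A.Normal] (hcomm : ∀ x ∈ A, ∀ y ∈ A, x * y = y * x) (hidx : A.index = 2)
    {b : G} (hb : b ∉ A) (x y : G) : ⁅x, y⁆ ∈ (commutatorHom A hcomm b).range := by
  have hσ : ∀ a ∈ A, b * a * b⁻¹ ∈ A := fun a ha => Subgroup.Normal.conj_mem ‹_› a ha b
  have hdecomp : ∀ g, g ∉ A → ∃ a ∈ A, g = a * b := fun g hg =>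
    ⟨g * b⁻¹, (Subgroup.mul_mem_iff_of_index_two hidx).2 (by simp [hg, hb]), by group⟩
  have hmem : ∀ a ∈ A, b * a * b⁻¹ * a⁻¹ ∈ (commutatorHom A hcomm b).range :=
    fun a ha => ⟨⟨a, ha⟩, rfl⟩
  have hmixed : ∀ a ∈ A, ∀ c ∈ A, ⁅a * b, c⁆ = b * c * b⁻¹ * c⁻¹ := fun a ha c hc =>
    calc ⁅a * b, c⁆ = a * (b * c * b⁻¹) * a⁻¹ * c⁻¹ := by rw [commutatorElement_def]; group
      _ = b * c * b⁻¹ * c⁻¹ := by rw [hcomm a ha _ (hσ c hc)]; group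
  by_cases hx : x ∈ A <;> by_cases hy : y ∈ A
  · rw [commutatorElement_eq_one_iff_mul_comm.2 (hcomm x hx y hy)]
    exact one_mem _
  · obtain ⟨c, hc, rfl⟩ := hdecomp y hy
    rw [← commutatorElement_inv, hmixed c hc x hx]
    exact inv_mem (hmem x hx)
  · obtain ⟨a, ha, rfl⟩ := hdecomp x hx
    rw [hmixed a ha y hy]
    exact hmem y hy
  · obtain ⟨a, ha, rfl⟩ := hdecomp x hx
    obtain ⟨c, hc, rfl⟩ := hdecomp y hy
    have hca : c * a⁻¹ ∈ A := A.mul_mem hc (A.inv_mem ha)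
    have h : ⁅a * b, c * b⁆ = b * (c * a⁻¹) * b⁻¹ * (c * a⁻¹)⁻¹ :=
      calc ⁅a * b, c * b⁆ = a * (b * (c * a⁻¹) * b⁻¹) * c⁻¹ := by
            rw [commutatorElement_def]; group
        _ = b * (c * a⁻¹) * b⁻¹ * (c * a⁻¹)⁻¹ := by rw [hcomm a ha _ (hσ _ hca)]; group
    rw [h]
    exact hmem _ hca

/-- Let `G` be a finite group, `A` an abelian subgroup of `G` of index 2, and `b ∈ G \ A`.
Then the set `B = {(b * a * b⁻¹) * a⁻¹ : a ∈ A}` is a subgroup of `G`, and it equals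
the commutator (derived) subgroup of `G`. -/
theorem stmt_3 {G : Type*} [Group G] [Finite G] (A : Subgroup G)
    (hcomm : ∀ x ∈ A, ∀ y ∈ A, x * y = y * x) (hidx : A.index = 2)
    (b : G) (hb : b ∉ A)
    (B : Set G) (hB : B = {x : G | ∃ a ∈ A, b * a * b⁻¹ * a⁻¹ = x}) :
    ∃ H : Subgroup G, (H : Set G) = B ∧ H = commutator G := by
  have := Subgroup.normal_of_index_eq_two hidx
  refine ⟨(commutatorHom A hcomm b).range, ?_, le_antisymm ?_ ?_⟩
  · ext x
    simp [hB, commutatorHom]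
  · rintro _ ⟨a, rfl⟩
    exact Subgroup.commutator_mem_commutator (Subgroup.mem_top b) (Subgroup.mem_top (a : G))
  · rw [commutator_def, Subgroup.commutator_le]
    exact fun x _ y _ => commutatorElement_mem_range_commutatorHom A hcomm hidx hb x y
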